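/- arXiv:1706.00234 — 3 statements merged into one kernel-verified Lean document; each statement's English description precedes it below -/
import Mathlib

section
/- Let f₀, f₁, …, f_p : ℝⁿ → ℝ be nonconstant polynomial functions, let S := {x ∈ ℝⁿ : f₁(x) ≤ 0, …, f_p(x) ≤ 0} be nonempty, assume f₀ is bounded from below on S, and set f* := inf_{x ∈ S} f₀(x). Assume the Mangasarian–Fromovitz property at infinity ((MF)∞) holds for the problem inf_{x ∈ S} f₀(x). If f₀ does not attain its infimum f* on S, then either f* = 0 or there exist a nonempty set J ⊆ {1, …, n}, a vector q ∈ ℝⁿ with min_{j ∈ J} q_j < 0, a point x* ∈ ℝⁿ, and scalars λ*₀, λ*₁, …, λ*_p such that, setting Δ_i := Δ(q, Γ(f_i)) for i = 0, 1, …, p: (i) x*_j = 0 if and only if j ∉ J; (ii) f* = f_{0,Δ₀}(x*), Δ₀ ⊆ ℝ^J, and d(q, Γ(f₀)) = 0; (iii) λ*₀ ∇f_{0,Δ₀}(x*) + Σ_{i=1}^p λ*_i ∇f_{i,Δ_i}(x*) = 0; (iv) f_{i,Δ_i}(x*) ≤ 0 and λ*_i f_{i,Δ_i}(x*) = 0 for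 i = 1, …, p; (v) the numbers λ*_i, i = 0, 1, …, p, are nonnegative and not all zero. -/
open MvPolynomial Set Filter
open scoped Classical

noncomputable section

/-- The exponent vector of a monomial, viewed as a point of `ℝⁿ`. -/
def expVec {n : ℕ} (κ : Fin n →₀ ℕ) : Fin n → ℝ := fun j => (κ j : ℝ)

/-- The Newton polyhedron at infinity `Γ(f)`: the convex hull of the support of `f`. -/
def NewtonPolyhedron {n : ℕ} (f : MvPolynomial (Fin n) ℝ) : Set (Fin n → ℝ) :=
  convexHull ℝ (expVec '' (f.support : Set (Fin n →₀ ℕ)))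

/-- `d(q, Γ(f)) := min {⟨q, κ⟩ : κ ∈ Γ(f)}`. -/
def NewtonD {n : ℕ} (f : MvPolynomial (Fin n) ℝ) (q : Fin n → ℝ) : ℝ :=
  sInf ((fun κ : Fin n → ℝ => ∑ j, q j * κ j) '' NewtonPolyhedron f)

/-- `Δ(q, Γ(f)) := {κ ∈ Γ(f) : ⟨q, κ⟩ = d(q, Γ(f))}`. -/
def NewtonFace {n : ℕ} (f : MvPolynomial (Fin n) ℝ) (q : Fin n → ℝ) : Set (Fin n → ℝ) :=
  {κ ∈ NewtonPolyhedron f | ∑ j, q j * κ j = NewtonD f q}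

/-- For a set `Δ ⊆ ℝⁿ`, the polynomial `f_Δ := ∑_{κ ∈ Δ} a_κ x^κ`. -/
def facePoly {n : ℕ} (f : MvPolynomial (Fin n) ℝ) (Δ : Set (Fin n → ℝ)) :
    MvPolynomial (Fin n) ℝ :=
  ∑ κ ∈ f.support.filter (fun κ => expVec κ ∈ Δ), monomial κ (f.coeff κ)

/-- `ℝ^J := {x ∈ ℝⁿ : x_j = 0 for all j ∉ J}`. -/
def RJ {n : ℕ} (J : Set (Fin n)) : Set (Fin n → ℝ) := {x | ∀ j ∉ J, x j = 0}

/-- The restriction of `f` to `ℝ^J` is not constant. -/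
def NotConstOn {n : ℕ} (f : MvPolynomial (Fin n) ℝ) (J : Set (Fin n)) : Prop :=
  ∃ x ∈ RJ J, ∃ y ∈ RJ J, eval x f ≠ eval y f

/-- The Mangasarian–Fromovitz property at infinity for `inf {f 0 x : f i x ≤ 0, i = 1,…,p}`. -/
def MFinfty {n p : ℕ} (f : Fin (p + 1) → MvPolynomial (Fin n) ℝ) : Prop :=
  ∀ J : Set (Fin n), J.Nonempty → ∀ q x : Fin n → ℝ,
    NewtonD (f 0) q < 0 →
    (∀ i, NotConstOn (f i) J → NewtonFace (f i) q ⊆ RJ J) →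
    (∀ j, x j = 0 ↔ j ∉ J) →
    (∀ i, i ≠ 0 → eval x (facePoly (f i) (NewtonFace (f i) q)) ≤ 0) →
    ∃ v : Fin n → ℝ, v ≠ 0 ∧ ∀ i, NotConstOn (f i) J →
      eval x (facePoly (f i) (NewtonFace (f i) q)) = 0 →
      ∑ j, eval x (pderiv j (facePoly (f i) (NewtonFace (f i) q))) * v j < 0

/-- Kouchnirenko non-degeneracy at infinity. -/
def NondegenerateAtInfinity {n : ℕ} (f : MvPolynomial (Fin n) ℝ) : Prop :=
  ∀ q : Fin n → ℝ, NewtonD f q < 0 →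
    ∀ x : Fin n → ℝ, (∀ j, x j ≠ 0) →
      ¬ ∀ j, eval x (pderiv j (facePoly f (NewtonFace f q))) = 0

/-- A convenient polynomial. -/
def Convenient {n : ℕ} (f : MvPolynomial (Fin n) ℝ) : Prop :=
  ∀ j : Fin n, ∃ c : ℝ, 0 < c ∧ c • (Pi.single j 1 : Fin n → ℝ) ∈ NewtonPolyhedron f

/-- A bad face of `Γ(f)`. -/
def BadFace {n : ℕ} (f : MvPolynomial (Fin n) ℝ) (Δ : Set (Fin n → ℝ)) : Prop :=
  (∃ q : Fin n → ℝ, Δ = NewtonFace f q) ∧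
  (0 : Fin n → ℝ) ∈ affineSpan ℝ Δ ∧
  ∃ q : Fin n → ℝ, (∃ i j, q i * q j < 0) ∧
    {κ : Fin n → ℝ | ∑ j, q j * κ j = 0} ∩ NewtonPolyhedron f = Δ

/-- The set of critical values of `f`. -/
def K0 {n : ℕ} (f : MvPolynomial (Fin n) ℝ) : Set ℝ :=
  {c | ∃ x : Fin n → ℝ, (∀ j, eval x (pderiv j f) = 0) ∧ eval x f = c}

/-- `Σ∞(f)`: critical values of `f_Δ` over all bad faces `Δ`. -/
def SigmaInfty {n : ℕ} (f : MvPolynomial (Fin n) ℝ) : Set ℝ :=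
  {c | ∃ Δ : Set (Fin n → ℝ), BadFace f Δ ∧ ∃ x : Fin n → ℝ,
    (∀ j, eval x (pderiv j (facePoly f Δ)) = 0) ∧ eval x (facePoly f Δ) = c}

/-- `Σ∞'(f)`: critical values of `f_Δ` on `(ℝ ∖ {0})ⁿ` over all bad faces `Δ`. -/
def SigmaInfty' {n : ℕ} (f : MvPolynomial (Fin n) ℝ) : Set ℝ :=
  {c | ∃ Δ : Set (Fin n → ℝ), BadFace f Δ ∧ ∃ x : Fin n → ℝ, (∀ j, x j ≠ 0) ∧
    (∀ j, eval x (pderiv j (facePoly f Δ)) = 0) ∧ eval x (facePoly f Δ) = c}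

/-- The Euclidean norm on `Fin k → ℝ`. -/
def euclNorm {k : ℕ} (x : Fin k → ℝ) : ℝ := Real.sqrt (∑ j, (x j) ^ 2)

/-- Basic semialgebraic subsets of `ℝ^m`. -/
def BasicSA {m : ℕ} (A : Set (Fin m → ℝ)) : Prop :=
  ∃ (k l : ℕ) (g : Fin k → MvPolynomial (Fin m) ℝ) (h : Fin l → MvPolynomial (Fin m) ℝ),
    A = {x | (∀ i, eval x (g i) = 0) ∧ ∀ i, 0 < eval x (h i)}

/-- Semialgebraic subsets of `ℝ^m`: finite unions of basic semialgebraic sets. -/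
def IsSA {m : ℕ} (A : Set (Fin m → ℝ)) : Prop :=
  ∃ (N : ℕ) (B : Fin N → Set (Fin m → ℝ)), (∀ i, BasicSA (B i)) ∧ A = ⋃ i, B i

/-- A semialgebraic scalar function on a domain `D ⊆ ℝ` (graph is semialgebraic). -/
def IsSAFunOn (D : Set ℝ) (f : ℝ → ℝ) : Prop :=
  IsSA {z : Fin 2 → ℝ | z 0 ∈ D ∧ z 1 = f (z 0)}

/-- A semialgebraic curve `D → ℝⁿ` (graph is semialgebraic). -/
def IsSACurve {n : ℕ} (D : Set ℝ) (φ : ℝ → Fin n → ℝ) : Prop :=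
  IsSA {z : Fin (n + 1) → ℝ | z 0 ∈ D ∧ ∀ j : Fin n, z j.succ = φ (z 0) j}

/-- A semialgebraic map `ℝⁿ → ℝ^p` (graph is semialgebraic). -/
def IsSAMap {n p : ℕ} (F : (Fin n → ℝ) → (Fin p → ℝ)) : Prop :=
  IsSA {z : Fin (n + p) → ℝ |
    (fun i : Fin p => z (Fin.natAdd n i)) = F (fun j : Fin n => z (Fin.castAdd p j))}

open Topology

/-- The stratum parametrization. -/
def expPt {n : ℕ} (σ y : Fin n → ℝ) : Fin n → ℝ := fun j => σ j * Real.exp (-(y j))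

/-- Weighted exponential sums. -/
def wSum {n : ℕ} (f : MvPolynomial (Fin n) ℝ) (T : Finset (Fin n →₀ ℕ)) (σ : Fin n → ℝ)
    (c : (Fin n →₀ ℕ) → ℝ) (y : Fin n → ℝ) : ℝ :=
  ∑ κ ∈ T, f.coeff κ * c κ * (∏ j, σ j ^ κ j) * Real.exp (-(y ⬝ᵥ expVec κ))

lemma prod_expPt {n : ℕ} (σ y : Fin n → ℝ) (κ : Fin n →₀ ℕ) :
    ∏ j, expPt σ y j ^ κ j = (∏ j, σ j ^ κ j) * Real.exp (-(y ⬝ᵥ expVec κ)) := by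
  simp only [expPt, mul_pow, Finset.prod_mul_distrib]
  congr 1
  simp only [← Real.exp_nat_mul, ← Real.exp_sum]
  congr 1
  simp only [dotProduct, expVec, ← Finset.sum_neg_distrib]
  exact Finset.sum_congr rfl fun j _ => by ring

lemma eval_expPt {n : ℕ} (f : MvPolynomial (Fin n) ℝ) (σ y : Fin n → ℝ) :
    eval (expPt σ y) f = wSum f f.support σ (fun _ => 1) y := by
  rw [eval_eq']
  unfold wSum
  refine Finset.sum_congr rfl fun κ _ => ?_
  rw [prod_expPt]; ring

lemma eval_face_expPt {n : ℕ} (f : MvPolynomial (Fin n) ℝ) (Δ : Set (Fin n → ℝ))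
    (σ y : Fin n → ℝ) :
    eval (expPt σ y) (facePoly f Δ) =
      wSum f (f.support.filter (fun κ => expVec κ ∈ Δ)) σ (fun _ => 1) y := by
  unfold wSum facePoly
  rw [map_sum]
  refine Finset.sum_congr rfl fun κ _ => ?_
  rw [eval_monomial, Finsupp.prod_fintype _ _ (by simp), prod_expPt]; ring

lemma eval_x_pderiv_monomial {n : ℕ} (x : Fin n → ℝ) (κ : Fin n →₀ ℕ) (a : ℝ) (j : Fin n) :
    x j * eval x (pderiv j (monomial κ a)) = κ j * eval x (monomial κ a) := by
  have h := congrArg (eval x) (X_mul_pderiv_monomial (i := j) (m := κ) (r := a))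
  simpa using h

lemma eval_face_deriv {n : ℕ} (f : MvPolynomial (Fin n) ℝ) (Δ : Set (Fin n → ℝ))
    (σ y v : Fin n → ℝ) :
    ∑ j, expPt σ y j * eval (expPt σ y) (pderiv j (facePoly f Δ)) * v j =
      wSum f (f.support.filter (fun κ => expVec κ ∈ Δ)) σ (fun κ => v ⬝ᵥ expVec κ) y := by
  unfold wSum facePoly
  simp only [map_sum, Finset.mul_sum, Finset.sum_mul]
  rw [Finset.sum_comm]
  refine Finset.sum_congr rfl fun κ _ => ?_
  simp only [eval_x_pderiv_monomial]
  rw [eval_monomial, Finsupp.prod_fintype _ _ (by simp), prod_expPt]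
  simp only [dotProduct, expVec, Finset.mul_sum, Finset.sum_mul]
  exact Finset.sum_congr rfl fun j _ => by ring

lemma hasDerivAt_wSum {n : ℕ} (f : MvPolynomial (Fin n) ℝ) (T : Finset (Fin n →₀ ℕ))
    (σ y v : Fin n → ℝ) :
    HasDerivAt (fun t : ℝ => wSum f T σ (fun _ => 1) (y - t • v))
      (wSum f T σ (fun κ => v ⬝ᵥ expVec κ) y) 0 := by
  unfold wSum
  apply HasDerivAt.fun_sum
  intro κ _
  have h1 : HasDerivAt (fun t : ℝ => -((y - t • v) ⬝ᵥ expVec κ)) (v ⬝ᵥ expVec κ) 0 := by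
    have : (fun t : ℝ => -((y - t • v) ⬝ᵥ expVec κ)) =
        fun t => t * (v ⬝ᵥ expVec κ) - y ⬝ᵥ expVec κ := by
      funext t
      rw [sub_dotProduct, smul_dotProduct, smul_eq_mul]; ring
    rw [this]
    simpa using ((hasDerivAt_id (0:ℝ)).mul_const (v ⬝ᵥ expVec κ)).sub_const (y ⬝ᵥ expVec κ)
  have h2 := (h1.exp).const_mul (f.coeff κ * 1 * ∏ j, σ j ^ κ j)
  refine h2.congr_deriv ?_
  rw [zero_smul, sub_zero]; ring

lemma eventually_lt_of_deriv_neg {g : ℝ → ℝ} {g' : ℝ} (h : HasDerivAt g g' 0) (hneg : g' < 0) :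
    ∀ᶠ t in 𝓝[>] (0:ℝ), g t < g 0 := by
  have h1 := (hasDerivAt_iff_tendsto_slope.1 h).mono_left
    (nhdsWithin_mono 0 (fun t (ht : 0 < t) => ne_of_gt ht) : 𝓝[>] (0:ℝ) ≤ 𝓝[≠] 0)
  filter_upwards [h1.eventually_lt_const hneg, self_mem_nhdsWithin] with t ht ht0
  rw [slope_def_field, sub_zero] at ht
  have ht0' : (0:ℝ) < t := ht0
  have := (div_neg_iff.1 ht)
  rcases this with h | h
  · linarith [h.2]
  · linarith [h.1]

lemma ultra_tri (U : Ultrafilter ℕ) (s : ℕ → ℝ) :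
    (∃ l, Tendsto s U (𝓝 l)) ∨ Tendsto s U atTop ∨ Tendsto s U atBot := by
  by_cases hb : ∃ C, ∀ᶠ k in (U : Filter ℕ), |s k| ≤ C
  · left
    obtain ⟨C, hC⟩ := hb
    have hK : IsCompact (Icc (-C) C) := isCompact_Icc
    obtain ⟨l, _, hl⟩ := hK.ultrafilter_le_nhds (U.map s) (by
      rw [le_principal_iff]
      have : ∀ᶠ k in (U : Filter ℕ), s k ∈ Icc (-C) C := by
        filter_upwards [hC] with k hk
        exact abs_le.1 hk
      exact this)
    exact ⟨l, hl⟩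
  · right
    push Not at hb
    have hb' : ∀ C, ∀ᶠ k in (U : Filter ℕ), C < |s k| := hb
    rcases Ultrafilter.eventually_or.1 (Eventually.of_forall (f := (U : Filter ℕ))
      (fun k => le_total 0 (s k))) with h | h
    · left
      rw [tendsto_atTop]
      intro b
      filter_upwards [h, hb' b] with k h1 h2
      rw [abs_of_nonneg h1] at h2; exact h2.le
    · right
      rw [tendsto_atBot]
      intro b
      filter_upwards [h, hb' (-b)] with k h1 h2
      rw [abs_of_nonpos h1] at h2; linarith

lemma split_seq {n : ℕ} (U : Ultrafilter ℕ) (y : ℕ → Fin n → ℝ) (A : Finset (Fin n → ℝ)) :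
    ∃ q z : Fin n → ℝ, ∀ a ∈ A,
      (q ⬝ᵥ a = 0 ∧ Tendsto (fun k => y k ⬝ᵥ a) U (𝓝 (z ⬝ᵥ a))) ∨
      (0 < q ⬝ᵥ a ∧ Tendsto (fun k => y k ⬝ᵥ a) U atTop) ∨
      (q ⬝ᵥ a < 0 ∧ Tendsto (fun k => y k ⬝ᵥ a) U atBot) := by
  let B := {a : (Fin n → ℝ) // a ∈ A ∧ ∃ l, Tendsto (fun k => y k ⬝ᵥ a) U (𝓝 l)}
  have : Finite B := Finite.of_injective (β := A) (fun b => ⟨b.1, b.2.1⟩)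
    (fun b c h => Subtype.ext (by simpa using h))
  have := Fintype.ofFinite B
  let L : (Fin n → ℝ) →ₗ[ℝ] (B → ℝ) :=
    { toFun := fun u b => u ⬝ᵥ b.1
      map_add' := fun u w => by funext b; simp [add_dotProduct]
      map_smul' := fun c u => by funext b; simp [smul_dotProduct] }
  obtain ⟨R, hR⟩ : ∃ R : (B → ℝ) →ₗ[ℝ] (Fin n → ℝ), ∀ u, L (R (L u)) = L u := by
    obtain ⟨g, hg⟩ := L.rangeRestrict.exists_rightInverse_of_surjective (by
      rw [LinearMap.range_rangeRestrict])
    obtain ⟨R, hR⟩ := LinearMap.exists_extend g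
    refine ⟨R, fun u => ?_⟩
    have h1 : R (L u) = g (L.rangeRestrict u) := by
      rw [← hR]; rfl
    rw [h1]
    have := congrArg Subtype.val (LinearMap.congr_fun hg (L.rangeRestrict u))
    exact this
  choose l hl using fun b : B => b.2.2
  have hLl : Tendsto (fun k => L (y k)) U (𝓝 l) := tendsto_pi_nhds.2 fun b => hl b
  have hRc : Continuous R := LinearMap.continuous_of_finiteDimensional R
  have hLc : Continuous L := LinearMap.continuous_of_finiteDimensional L
  have hRl : Tendsto (fun k => R (L (y k))) U (𝓝 (R l)) := (hRc.tendsto l).comp hLl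
  have hLR : L (R l) = l := by
    have h1 : Tendsto (fun k => L (R (L (y k)))) U (𝓝 (L (R l))) := (hLc.tendsto _).comp hRl
    simp only [hR] at h1
    exact tendsto_nhds_unique h1 hLl
  have hdc : ∀ a : Fin n → ℝ, Tendsto (fun k => R (L (y k)) ⬝ᵥ a) U (𝓝 (R l ⬝ᵥ a)) := by
    intro a
    have hc : Continuous (fun u : Fin n → ℝ => u ⬝ᵥ a) := by
      unfold dotProduct; fun_prop
    exact (hc.tendsto _).comp hRl
  have key : ∀ a ∈ A, ∀ᶠ k in (U : Filter ℕ),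
      ((y k - R (L (y k))) ⬝ᵥ a = 0 ∧ Tendsto (fun k => y k ⬝ᵥ a) U (𝓝 (R l ⬝ᵥ a))) ∨
      (0 < (y k - R (L (y k))) ⬝ᵥ a ∧ Tendsto (fun k => y k ⬝ᵥ a) U atTop) ∨
      ((y k - R (L (y k))) ⬝ᵥ a < 0 ∧ Tendsto (fun k => y k ⬝ᵥ a) U atBot) := by
    intro a ha
    rcases ultra_tri U (fun k => y k ⬝ᵥ a) with h | h | h
    · let b : B := ⟨a, ha, h⟩
      refine Eventually.of_forall fun k => Or.inl ⟨?_, ?_⟩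
      · rw [sub_dotProduct]
        have : R (L (y k)) ⬝ᵥ a = y k ⬝ᵥ a := congrFun (hR (y k)) b
        linarith
      · have : R l ⬝ᵥ a = l b := congrFun hLR b
        rw [this]; exact hl b
    · have h2 : Tendsto (fun k => y k ⬝ᵥ a + -(R (L (y k)) ⬝ᵥ a)) U atTop :=
        h.atTop_add (hdc a).neg
      filter_upwards [h2.eventually_gt_atTop 0] with k hk
      refine Or.inr (Or.inl ⟨?_, h⟩)
      rw [sub_dotProduct]; linarith
    · have h2 : Tendsto (fun k => y k ⬝ᵥ a + -(R (L (y k)) ⬝ᵥ a)) U atBot :=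
        h.atBot_add (hdc a).neg
      filter_upwards [h2.eventually_lt_atBot 0] with k hk
      refine Or.inr (Or.inr ⟨?_, h⟩)
      rw [sub_dotProduct]; linarith
  obtain ⟨k, hk⟩ := ((Finset.eventually_all A).2 key).exists
  exact ⟨y k - R (L (y k)), R l, hk⟩

lemma gordan {n : ℕ} {ι : Type*} [Fintype ι] [Nonempty ι] (g : ι → Fin n → ℝ) :
    (∃ v : Fin n → ℝ, ∀ i, ∑ j, g i j * v j < 0) ∨
    ∃ lam : ι → ℝ, (∀ i, 0 ≤ lam i) ∧ lam ≠ 0 ∧ ∀ j, ∑ i, lam i * g i j = 0 := by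
  by_cases h0 : (0 : Fin n → ℝ) ∈ convexHull ℝ (Set.range g)
  · right
    rw [convexHull_range_eq_exists_affineCombination] at h0
    obtain ⟨s, w, hw0, hw1, hw⟩ := h0
    rw [Finset.affineCombination_eq_linear_combination _ _ _ hw1] at hw
    refine ⟨fun i => if i ∈ s then w i else 0, ?_, ?_, ?_⟩
    · intro i; dsimp only; split_ifs with h
      · exact hw0 i h
      · exact le_rfl
    · intro h
      have : ∑ i ∈ s, w i = 0 := by
        refine Finset.sum_eq_zero fun i hi => ?_
        have := congrFun h i
        simpa [hi] using this
      rw [hw1] at this; exact one_ne_zero this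
    · intro j
      have := congrFun hw j
      simp only [Finset.sum_apply, Pi.smul_apply, smul_eq_mul, Pi.zero_apply] at this
      simp only [ite_mul, zero_mul]
      rw [Finset.sum_ite_mem, Finset.univ_inter]
      exact this
  · left
    have hcl : IsClosed (convexHull ℝ (Set.range g)) :=
      ((Set.finite_range g).isCompact_convexHull ℝ).isClosed
    obtain ⟨φ, u, h1, h2⟩ := geometric_hahn_banach_point_closed (convex_convexHull ℝ _) hcl h0
    refine ⟨fun j => - φ (Pi.single j 1), fun i => ?_⟩
    have h3 := h2 (g i) (subset_convexHull ℝ _ ⟨i, rfl⟩)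
    rw [map_zero] at h1
    have h4 : φ (g i) = ∑ j, g i j * φ (Pi.single j 1) := by
      conv_lhs => rw [pi_eq_sum_univ' (g i)]
      simp [map_sum]
    simp only [mul_neg, Finset.sum_neg_distrib]
    linarith

lemma le_of_mem_newton {n : ℕ} (f : MvPolynomial (Fin n) ℝ) (a : Fin n → ℝ) (d : ℝ)
    (h : ∀ κ ∈ f.support, d ≤ a ⬝ᵥ expVec κ) :
    ∀ z ∈ NewtonPolyhedron f, d ≤ a ⬝ᵥ z := by
  have hconv : Convex ℝ {z : Fin n → ℝ | d ≤ a ⬝ᵥ z} := by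
    apply convex_halfSpace_ge
    exact ⟨fun x y => dotProduct_add _ _ _, fun c x => dotProduct_smul _ _ _⟩
  have : NewtonPolyhedron f ⊆ {z : Fin n → ℝ | d ≤ a ⬝ᵥ z} := by
    refine convexHull_min ?_ hconv
    rintro _ ⟨κ, hκ, rfl⟩
    exact h κ hκ
  exact this

lemma mem_newton {n : ℕ} (f : MvPolynomial (Fin n) ℝ) {κ : Fin n →₀ ℕ} (h : κ ∈ f.support) :
    expVec κ ∈ NewtonPolyhedron f := subset_convexHull ℝ _ ⟨κ, h, rfl⟩

lemma newtonD_eq {n : ℕ} (f : MvPolynomial (Fin n) ℝ) (q : Fin n → ℝ) {κ₀ : Fin n →₀ ℕ}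
    (h0 : κ₀ ∈ f.support) (h : ∀ κ ∈ f.support, q ⬝ᵥ expVec κ₀ ≤ q ⬝ᵥ expVec κ) :
    NewtonD f q = q ⬝ᵥ expVec κ₀ := by
  apply IsLeast.csInf_eq
  refine ⟨⟨expVec κ₀, mem_newton f h0, rfl⟩, ?_⟩
  rintro _ ⟨z, hz, rfl⟩
  exact le_of_mem_newton f q _ h z hz

lemma mem_face_iff {n : ℕ} (f : MvPolynomial (Fin n) ℝ) (q : Fin n → ℝ) {κ₀ κ : Fin n →₀ ℕ}
    (h0 : κ₀ ∈ f.support) (h : ∀ κ ∈ f.support, q ⬝ᵥ expVec κ₀ ≤ q ⬝ᵥ expVec κ)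
    (hκ : κ ∈ f.support) :
    expVec κ ∈ NewtonFace f q ↔ q ⬝ᵥ expVec κ = q ⬝ᵥ expVec κ₀ := by
  unfold NewtonFace
  rw [newtonD_eq f q h0 h]
  exact ⟨fun h => h.2, fun h => ⟨mem_newton f hκ, h⟩⟩

lemma face_subset_RJ {n : ℕ} (f : MvPolynomial (Fin n) ℝ) (q : Fin n → ℝ) (J : Set (Fin n))
    (h : ∀ κ ∈ f.support, ∀ j ∉ J, expVec κ j + NewtonD f q ≤ q ⬝ᵥ expVec κ) :
    NewtonFace f q ⊆ RJ J := by
  rintro z ⟨hz, hd⟩ j hj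
  have h1 := le_of_mem_newton f (q - Pi.single j 1) (NewtonD f q) (fun κ hκ => by
    have := h κ hκ j hj
    rw [sub_dotProduct, single_one_dotProduct]; linarith) z hz
  have h2 := le_of_mem_newton f (Pi.single j 1) 0 (fun κ hκ => by
    rw [single_one_dotProduct]; exact Nat.cast_nonneg _) z hz
  rw [sub_dotProduct, single_one_dotProduct] at h1
  rw [single_one_dotProduct] at h2
  have hd' : q ⬝ᵥ z = NewtonD f q := hd
  linarith

/-- Existence of a `q` which agrees with the given one on `J` and selects faces in `ℝ^J`. -/
lemma exists_override {n : ℕ} {ι : Type*} [Fintype ι] (f : ι → MvPolynomial (Fin n) ℝ)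
    (q : Fin n → ℝ) (J : Set (Fin n)) :
    ∃ q' : Fin n → ℝ, (∀ j ∈ J, q' j = q j) ∧ ∀ i, ∀ κ ∈ (f i).support, ∀ κ' ∈ (f i).support,
      expVec κ ∈ RJ J → ∀ j ∉ J, expVec κ' j ≠ 0 →
        expVec κ' j + q' ⬝ᵥ expVec κ ≤ q' ⬝ᵥ expVec κ' := by
  let r : Fin n → ℝ := fun j => if j ∈ J then q j else 0
  obtain ⟨B, hB⟩ : ∃ B : ℝ, ∀ i, ∀ κ ∈ (f i).support, |r ⬝ᵥ expVec κ| ≤ B := by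
    refine ⟨∑ i, ∑ κ ∈ (f i).support, |r ⬝ᵥ expVec κ|, fun i κ hκ => ?_⟩
    calc _ ≤ ∑ κ ∈ (f i).support, |r ⬝ᵥ expVec κ| :=
          Finset.single_le_sum (f := fun κ => |r ⬝ᵥ expVec κ|) (fun _ _ => abs_nonneg _) hκ
      _ ≤ _ := Finset.single_le_sum (f := fun i => ∑ κ ∈ (f i).support, |r ⬝ᵥ expVec κ|)
          (fun _ _ => Finset.sum_nonneg fun _ _ => abs_nonneg _) (Finset.mem_univ i)
  let m : Fin n → ℝ := fun j => if j ∈ J then 0 else 1 + 2 * B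
  refine ⟨r + m, fun j hj => by simp [r, m, hj], ?_⟩
  intro i κ hκ κ' hκ' hJ j hj hne
  have h1 := abs_le.1 (hB i κ hκ)
  have h2 := abs_le.1 (hB i κ' hκ')
  have hB0 : 0 ≤ B := (abs_nonneg _).trans (hB i κ hκ)
  have h3 : m ⬝ᵥ expVec κ = 0 := by
    refine Finset.sum_eq_zero fun l _ => ?_
    by_cases hl : l ∈ J
    · simp [m, hl]
    · rw [hJ l hl, mul_zero]
  have h4 : (1 + 2 * B) * expVec κ' j ≤ m ⬝ᵥ expVec κ' := by
    have hm : m j * expVec κ' j = (1 + 2 * B) * expVec κ' j := by simp [m, hj]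
    rw [← hm]
    refine Finset.single_le_sum (f := fun l => m l * expVec κ' l) (fun l _ => ?_)
      (Finset.mem_univ j)
    refine mul_nonneg ?_ (Nat.cast_nonneg _)
    simp only [m]; split_ifs <;> linarith
  have h5 : 1 ≤ expVec κ' j := by
    unfold expVec at hne ⊢
    exact_mod_cast Nat.one_le_iff_ne_zero.2 (by exact_mod_cast hne)
  rw [add_dotProduct, add_dotProduct]
  nlinarith

lemma dot_congr_RJ {n : ℕ} {J : Set (Fin n)} {q q' : Fin n → ℝ} (h : ∀ j ∈ J, q' j = q j)
    {a : Fin n → ℝ} (ha : a ∈ RJ J) : q' ⬝ᵥ a = q ⬝ᵥ a := by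
  refine Finset.sum_congr rfl fun j _ => ?_
  by_cases hj : j ∈ J
  · rw [h j hj]
  · rw [ha j hj, mul_zero, mul_zero]

lemma prod_zero_of_not_RJ {n : ℕ} {J : Set (Fin n)} {σ : Fin n → ℝ} (hσ : ∀ j ∉ J, σ j = 0)
    {κ : Fin n →₀ ℕ} (h : expVec κ ∉ RJ J) : ∏ j, σ j ^ κ j = 0 := by
  simp only [RJ, Set.mem_ofPred_eq, not_forall] at h
  obtain ⟨j, hj, hne⟩ := h
  refine Finset.prod_eq_zero (Finset.mem_univ j) ?_
  rw [hσ j hj]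
  exact zero_pow (by unfold expVec at hne; exact_mod_cast hne)

lemma exists_RJ_of_notConst {n : ℕ} {J : Set (Fin n)} {f : MvPolynomial (Fin n) ℝ}
    (h : NotConstOn f J) : ∃ κ ∈ f.support, expVec κ ∈ RJ J := by
  by_contra hcon
  push Not at hcon
  obtain ⟨x, hx, y, hy, hne⟩ := h
  apply hne
  have : ∀ x ∈ RJ J, eval x f = 0 := by
    intro x hx
    rw [eval_eq']
    refine Finset.sum_eq_zero fun κ hκ => ?_
    rw [prod_zero_of_not_RJ hx (hcon κ hκ), mul_zero]
  rw [this x hx, this y hy]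

/-- The fundamental limit. -/
lemma wSum_limit {n : ℕ} (U : Ultrafilter ℕ) (y : ℕ → Fin n → ℝ) (f : MvPolynomial (Fin n) ℝ)
    (J : Set (Fin n)) (σ q' z : Fin n → ℝ) (hσ : ∀ j ∉ J, σ j = 0) {κ₀ : Fin n →₀ ℕ}
    (h0 : κ₀ ∈ f.support)
    (hmin : ∀ κ ∈ f.support, q' ⬝ᵥ expVec κ₀ ≤ q' ⬝ᵥ expVec κ)
    (hA : ∀ κ ∈ f.support, expVec κ ∈ RJ J →
      (q' ⬝ᵥ (expVec κ - expVec κ₀) = 0 ∧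
        Tendsto (fun k => y k ⬝ᵥ (expVec κ - expVec κ₀)) U (𝓝 (z ⬝ᵥ (expVec κ - expVec κ₀)))) ∨
      (0 < q' ⬝ᵥ (expVec κ - expVec κ₀) ∧
        Tendsto (fun k => y k ⬝ᵥ (expVec κ - expVec κ₀)) U atTop) ∨
      (q' ⬝ᵥ (expVec κ - expVec κ₀) < 0 ∧
        Tendsto (fun k => y k ⬝ᵥ (expVec κ - expVec κ₀)) U atBot))
    (c : (Fin n →₀ ℕ) → ℝ) :
    Tendsto (fun k => Real.exp (y k ⬝ᵥ expVec κ₀) * wSum f f.support σ c (y k)) U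
      (𝓝 (Real.exp (z ⬝ᵥ expVec κ₀) *
        wSum f (f.support.filter (fun κ => expVec κ ∈ NewtonFace f q')) σ c z)) := by
  unfold wSum
  simp only [Finset.mul_sum]
  rw [Finset.sum_filter]
  refine tendsto_finsetSum _ fun κ hκ => ?_
  have hexp : ∀ u : Fin n → ℝ, Real.exp (u ⬝ᵥ expVec κ₀) *
      (f.coeff κ * c κ * (∏ j, σ j ^ κ j) * Real.exp (-(u ⬝ᵥ expVec κ))) =
      (f.coeff κ * c κ * (∏ j, σ j ^ κ j)) * Real.exp (-(u ⬝ᵥ (expVec κ - expVec κ₀))) := by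
    intro u
    rw [dotProduct_sub, neg_sub, sub_eq_add_neg, Real.exp_add]; ring
  simp only [hexp]
  by_cases hJ : expVec κ ∈ RJ J
  · rcases hA κ hκ hJ with ⟨h1, h2⟩ | ⟨h1, h2⟩ | ⟨h1, _⟩
    · rw [dotProduct_sub, sub_eq_zero] at h1
      rw [if_pos ((mem_face_iff f q' h0 hmin hκ).2 h1)]
      exact ((Real.continuous_exp.tendsto _).comp h2.neg).const_mul _
    · rw [dotProduct_sub] at h1
      rw [if_neg (fun h => by
        have := (mem_face_iff f q' h0 hmin hκ).1 h
        linarith)]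
      rw [← mul_zero (f.coeff κ * c κ * (∏ j, σ j ^ κ j))]
      exact (Real.tendsto_exp_neg_atTop_nhds_zero.comp h2).const_mul _
    · rw [dotProduct_sub] at h1
      have := hmin κ hκ
      linarith
  · rw [prod_zero_of_not_RJ hσ hJ]
    simp

lemma exists_stratum {n : ℕ} (S : Set (Fin n → ℝ)) (F : (Fin n → ℝ) → ℝ) (m : ℝ)
    (happ : ∀ δ > 0, ∃ x ∈ S, F x < m + δ) :
    ∃ σ : Fin n → ℝ, ∀ δ > 0, ∃ y, expPt σ y ∈ S ∧ F (expPt σ y) < m + δ := by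
  by_contra hcon
  push Not at hcon
  choose δ hδ h using fun s : Fin n → SignType => hcon (fun j => (s j : ℝ))
  obtain ⟨s0, hs0⟩ := Finite.exists_min δ
  obtain ⟨x, hx, hF⟩ := happ (δ s0) (hδ s0)
  have hx' : expPt (fun j => ((SignType.sign (x j) : SignType) : ℝ))
      (fun j => -Real.log |x j|) = x := by
    funext j
    unfold expPt
    by_cases hj : x j = 0
    · simp [hj]
    · rw [neg_neg, Real.exp_log (abs_pos.2 hj), sign_mul_abs]
  have := h (fun j => SignType.sign (x j)) (fun j => -Real.log |x j|)
  rw [hx'] at this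
  have h1 := this hx
  have h2 := hs0 (fun j => SignType.sign (x j))
  linarith

lemma continuous_expPt {n : ℕ} (σ : Fin n → ℝ) : Continuous (expPt σ) := by
  unfold expPt; fun_prop

lemma exists_penalized {n : ℕ} (S : Set (Fin n → ℝ)) (hS : IsClosed S) (F : (Fin n → ℝ) → ℝ)
    (hF : Continuous F) (m : ℝ) (hlow : ∀ x ∈ S, m ≤ F x) (σ : Fin n → ℝ)
    (hne : ∃ y, expPt σ y ∈ S) (ε : ℝ) (hε : 0 < ε) :
    ∃ y, expPt σ y ∈ S ∧ ∀ y', expPt σ y' ∈ S →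
      F (expPt σ y) + ε * ‖y‖ ≤ F (expPt σ y') + ε * ‖y'‖ := by
  obtain ⟨y0, hy0⟩ := hne
  have hc : Continuous (fun y : Fin n → ℝ => F (expPt σ y) + ε * ‖y‖) :=
    (hF.comp (continuous_expPt σ)).add (continuous_const.mul continuous_norm)
  obtain ⟨y, hy, hmin⟩ := ContinuousOn.exists_isMinOn' (s := expPt σ ⁻¹' S) hc.continuousOn
    (hS.preimage (continuous_expPt σ)) (x₀ := y0) hy0 (by
      have h1 : Tendsto (fun y : Fin n → ℝ => m + ε * ‖y‖) (cocompact _) atTop :=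
        tendsto_atTop_add_const_left _ _ ((tendsto_norm_cocompact_atTop).const_mul_atTop hε)
      have h2 := (h1.eventually_ge_atTop (F (expPt σ y0) + ε * ‖y0‖)).filter_mono
        (inf_le_left : cocompact (Fin n → ℝ) ⊓ 𝓟 (expPt σ ⁻¹' S) ≤ _)
      have h3 : ∀ᶠ y in cocompact (Fin n → ℝ) ⊓ 𝓟 (expPt σ ⁻¹' S), expPt σ y ∈ S :=
        Eventually.filter_mono inf_le_right (mem_principal_self _)
      filter_upwards [h2, h3] with y h2 h3
      have := hlow _ h3
      linarith)
  exact ⟨y, hy, fun y' hy' => hmin hy'⟩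

lemma tendsto_penalized {n : ℕ} (S : Set (Fin n → ℝ)) (F : (Fin n → ℝ) → ℝ)
    (m : ℝ) (hlow : ∀ x ∈ S, m ≤ F x) (σ : Fin n → ℝ)
    (happ : ∀ δ > 0, ∃ y, expPt σ y ∈ S ∧ F (expPt σ y) < m + δ)
    (y : ℕ → Fin n → ℝ) (hy : ∀ k, expPt σ (y k) ∈ S)
    (hmin : ∀ k y', expPt σ y' ∈ S →
      F (expPt σ (y k)) + 1 / ((k : ℝ) + 1) * ‖y k‖ ≤ F (expPt σ y') + 1 / ((k : ℝ) + 1) * ‖y'‖) :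
    Tendsto (fun k => F (expPt σ (y k))) atTop (𝓝 m) := by
  rw [Metric.tendsto_atTop']
  intro δ hδ
  obtain ⟨y', hy', hF⟩ := happ (δ / 2) (by linarith)
  have h1 : Tendsto (fun k : ℕ => 1 / ((k : ℝ) + 1) * ‖y'‖) atTop (𝓝 (0 * ‖y'‖)) :=
    tendsto_one_div_add_atTop_nhds_zero_nat.mul_const _
  rw [zero_mul] at h1
  obtain ⟨N, hN⟩ := eventually_atTop.1 (h1.eventually_lt_const (show 0 < δ / 2 by linarith))
  refine ⟨N, fun k hk => ?_⟩
  have h2 := hN k hk.le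
  have h3 := hmin k y' hy'
  have h4 := hlow _ (hy k)
  have h5 : 0 ≤ 1 / ((k : ℝ) + 1) * ‖y k‖ := by positivity
  rw [Real.dist_eq, abs_of_nonneg (by linarith)]
  linarith

/-- The descent step: no common strict descent direction at the limit. -/
lemma no_descent {n p : ℕ} (f : Fin (p + 1) → MvPolynomial (Fin n) ℝ) (U : Ultrafilter ℕ)
    (hU : (U : Filter ℕ) ≤ atTop)
    (σ : Fin n → ℝ) (y : ℕ → Fin n → ℝ) (I : Set (Fin (p + 1)))
    (hI0 : (0 : Fin (p + 1)) ∈ I)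
    (hconst : ∀ i ∉ I, ∀ u w, eval (expPt σ u) (f i) = eval (expPt σ w) (f i))
    (hfeas : ∀ k, ∀ i, i ≠ 0 → eval (expPt σ (y k)) (f i) ≤ 0)
    (hmin : ∀ k y', (∀ i, i ≠ 0 → eval (expPt σ y') (f i) ≤ 0) →
      eval (expPt σ (y k)) (f 0) + 1 / ((k : ℝ) + 1) * ‖y k‖ ≤
        eval (expPt σ y') (f 0) + 1 / ((k : ℝ) + 1) * ‖y'‖)
    (w : Fin (p + 1) → ℕ → ℝ) (hw : ∀ i k, 0 < w i k) (C : ℝ)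
    (hw0 : ∀ᶠ k in (U : Filter ℕ), w 0 k ≤ C)
    (v : Fin n → ℝ) (a b : Fin (p + 1) → ℝ)
    (ha : ∀ i ∈ I, Tendsto (fun k => w i k * wSum (f i) (f i).support σ (fun _ => 1) (y k)) U
      (𝓝 (a i)))
    (hb : ∀ i ∈ I, Tendsto
      (fun k => w i k * wSum (f i) (f i).support σ (fun κ => v ⬝ᵥ expVec κ) (y k)) U (𝓝 (b i)))
    (hapos : ∀ i ∈ I, i ≠ 0 → a i ≤ 0)
    (hdesc : ∀ i ∈ I, (i = 0 ∨ a i = 0) → b i < 0) : False := by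
  -- objective
  have hobj : ∀ᶠ k in (U : Filter ℕ), wSum (f 0) (f 0).support σ (fun κ => v ⬝ᵥ expVec κ) (y k)
      + 1 / ((k : ℝ) + 1) * ‖v‖ < 0 := by
    have hb0 := hdesc 0 hI0 (Or.inl rfl)
    have h1 : Tendsto (fun k : ℕ => C * (1 / ((k : ℝ) + 1) * ‖v‖)) atTop
        (𝓝 (C * (0 * ‖v‖))) :=
      (tendsto_one_div_add_atTop_nhds_zero_nat.mul_const _).const_mul _
    have h2 := (hb 0 hI0).add (h1.mono_left hU)
    filter_upwards [h2.eventually_lt_const (show b 0 + C * (0 * ‖v‖) < 0 by simpa using hb0), hw0]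
      with k hk hC
    have h5 : 0 ≤ 1 / ((k : ℝ) + 1) * ‖v‖ := by positivity
    have h6 := mul_le_mul_of_nonneg_right hC h5
    by_contra hcon
    push Not at hcon
    have := mul_nonneg (hw 0 k).le hcon
    rw [mul_add] at this
    linarith
  have hcons : ∀ i, i ≠ 0 → ∀ᶠ k in (U : Filter ℕ), ∀ᶠ t in 𝓝[>] (0:ℝ),
      eval (expPt σ (y k - t • v)) (f i) ≤ 0 := by
    intro i hi
    by_cases hiI : i ∈ I
    · rcases (hapos i hiI hi).lt_or_eq with hlt | heq
      · filter_upwards [(ha i hiI).eventually_lt_const hlt] with k hk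
        have hneg : eval (expPt σ (y k)) (f i) < 0 := by
          rw [eval_expPt]
          exact (pos_iff_neg_of_mul_neg hk).1 (hw i k)
        have hc : Continuous (fun t : ℝ => eval (expPt σ (y k - t • v)) (f i)) := by
          have h1 : Continuous (fun x => eval x (f i)) := MvPolynomial.continuous_eval (f i)
          exact h1.comp ((continuous_expPt σ).comp (by fun_prop))
        have h2 := (hc.tendsto 0).eventually_lt_const (u := 0) (by simpa using hneg)
        exact (h2.filter_mono nhdsWithin_le_nhds).mono fun t ht => ht.le
      · filter_upwards [(hb i hiI).eventually_lt_const (hdesc i hiI (Or.inr heq))] with k hk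
        have hneg := (pos_iff_neg_of_mul_neg hk).1 (hw i k)
        have h2 := eventually_lt_of_deriv_neg (hasDerivAt_wSum (f i) _ σ (y k) v) hneg
        filter_upwards [h2] with t ht
        rw [zero_smul, sub_zero, ← eval_expPt, ← eval_expPt] at ht
        exact ht.le.trans (hfeas k i hi)
    · refine Eventually.of_forall fun k => Eventually.of_forall fun t => ?_
      rw [hconst i hiI _ (y k)]
      exact hfeas k i hi
  have hcons' : ∀ᶠ k in (U : Filter ℕ), ∀ i, i ≠ 0 → ∀ᶠ t in 𝓝[>] (0:ℝ),
      eval (expPt σ (y k - t • v)) (f i) ≤ 0 :=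
    eventually_all.2 fun i => by
      by_cases hi : i = 0
      · exact Eventually.of_forall fun k h => absurd hi h
      · exact (hcons i hi).mono fun k hk _ => hk
  obtain ⟨k, hk1, hk2⟩ := (hobj.and hcons').exists
  have h1 : HasDerivAt (fun t : ℝ => wSum (f 0) (f 0).support σ (fun _ => 1) (y k - t • v)
      + t * (1 / ((k : ℝ) + 1) * ‖v‖)) _ 0 := (hasDerivAt_wSum (f 0) _ σ (y k) v).add
    ((hasDerivAt_id (0:ℝ)).mul_const (1 / ((k : ℝ) + 1) * ‖v‖))
  have h2 := eventually_lt_of_deriv_neg h1 (by simpa using hk1)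
  have h3 : ∀ᶠ t in 𝓝[>] (0:ℝ), ∀ i, i ≠ 0 → eval (expPt σ (y k - t • v)) (f i) ≤ 0 :=
    eventually_all.2 fun i => by
      by_cases hi : i = 0
      · exact Eventually.of_forall fun k h => absurd hi h
      · exact (hk2 i hi).mono fun k hk _ => hk
  obtain ⟨t, ⟨h2, h3⟩, ht⟩ := ((h2.and h3).and self_mem_nhdsWithin).exists
  have ht0 : (0:ℝ) < t := ht
  have h4 := hmin k _ h3
  rw [zero_smul, sub_zero, ← eval_expPt, ← eval_expPt] at h2
  have h5 : ‖y k - t • v‖ ≤ ‖y k‖ + t * ‖v‖ := by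
    refine (norm_sub_le _ _).trans ?_
    rw [norm_smul, Real.norm_of_nonneg ht0.le]
  have h6 : 0 ≤ 1 / ((k : ℝ) + 1) := by positivity
  have h7 := mul_le_mul_of_nonneg_left h5 h6
  nlinarith

/-- **Theorem 3.1 (Fritz-John optimality conditions at infinity).** -/
theorem fritz_john_at_infinity {n p : ℕ} (f : Fin (p + 1) → MvPolynomial (Fin n) ℝ)
    (hnc : ∀ i, ∃ x y : Fin n → ℝ, eval x (f i) ≠ eval y (f i))
    (S : Set (Fin n → ℝ))
    (hS : S = {x | ∀ i, i ≠ 0 → eval x (f i) ≤ 0})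
    (hSne : S.Nonempty)
    (hbdd : BddBelow ((fun x => eval x (f 0)) '' S))
    (fstar : ℝ) (hfstar : fstar = sInf ((fun x => eval x (f 0)) '' S))
    (hMF : MFinfty f)
    (hnotatt : ∀ x ∈ S, eval x (f 0) ≠ fstar) :
    fstar = 0 ∨
      ∃ (J : Set (Fin n)) (q xs : Fin n → ℝ) (lam : Fin (p + 1) → ℝ),
        J.Nonempty ∧
        (∃ j ∈ J, q j < 0) ∧
        -- (i)
        (∀ j, xs j = 0 ↔ j ∉ J) ∧
        -- (ii)
        (fstar = eval xs (facePoly (f 0) (NewtonFace (f 0) q)) ∧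
          NewtonFace (f 0) q ⊆ RJ J ∧ NewtonD (f 0) q = 0) ∧
        -- (iii)
        (∀ j : Fin n,
          ∑ i, lam i * eval xs (pderiv j (facePoly (f i) (NewtonFace (f i) q))) = 0) ∧
        -- (iv)
        (∀ i, i ≠ 0 → eval xs (facePoly (f i) (NewtonFace (f i) q)) ≤ 0 ∧
          lam i * eval xs (facePoly (f i) (NewtonFace (f i) q)) = 0) ∧
        -- (v)
        ((∀ i, 0 ≤ lam i) ∧ lam ≠ 0) := by
  have hmemS : ∀ x, x ∈ S ↔ ∀ i, i ≠ 0 → eval x (f i) ≤ 0 := fun x => by rw [hS]; rfl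
  have hcont : ∀ i, Continuous (fun x => eval x (f i)) := fun i => MvPolynomial.continuous_eval (f i)
  have hScl : IsClosed S := by
    have : S = ⋂ i, ⋂ (_ : i ≠ 0), {x | eval x (f i) ≤ 0} := by
      ext x; rw [hmemS]; simp
    rw [this]
    exact isClosed_iInter fun i => isClosed_iInter fun _ =>
      isClosed_le (hcont i) continuous_const
  have hlow : ∀ x ∈ S, fstar ≤ eval x (f 0) := by
    intro x hx
    rw [hfstar]
    exact csInf_le hbdd ⟨x, hx, rfl⟩
  have happ0 : ∀ δ > 0, ∃ x ∈ S, eval x (f 0) < fstar + δ := by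
    intro δ hδ
    have h1 : sInf ((fun x => eval x (f 0)) '' S) < fstar + δ := by rw [← hfstar]; linarith
    obtain ⟨_, ⟨x, hx, rfl⟩, h⟩ := exists_lt_of_csInf_lt (hSne.image _) h1
    exact ⟨x, hx, h⟩
  obtain ⟨σ, happ⟩ := exists_stratum S (fun x => eval x (f 0)) fstar happ0
  have hneσ : ∃ y, expPt σ y ∈ S := (happ 1 one_pos).imp fun y h => h.1
  choose y hyS hymin using fun k : ℕ => exists_penalized S hScl (fun x => eval x (f 0)) (hcont 0)
    fstar hlow σ hneσ (1 / ((k : ℝ) + 1)) (by positivity)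
  have hlim0 := tendsto_penalized S (fun x => eval x (f 0)) fstar hlow σ happ y hyS hymin
  let U : Ultrafilter ℕ := hyperfilter ℕ
  have hU : (U : Filter ℕ) ≤ atTop := Nat.hyperfilter_le_atTop
  have hlim : Tendsto (fun k => eval (expPt σ (y k)) (f 0)) U (𝓝 fstar) := hlim0.mono_left hU
  let J : Set (Fin n) := {j | σ j ≠ 0}
  have hσJ : ∀ j ∉ J, σ j = 0 := fun j hj => by simpa [J] using hj
  have hexpRJ : ∀ u, expPt σ u ∈ RJ J := fun u j hj => by
    unfold expPt; rw [hσJ j hj, zero_mul]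
  have hconst : ∀ i, ¬ NotConstOn (f i) J → ∀ u ∈ RJ J, ∀ w ∈ RJ J, eval u (f i) = eval w (f i) := by
    intro i hi u hu w hw
    by_contra hne
    exact hi ⟨u, hu, w, hw, hne⟩
  have hI0 : NotConstOn (f 0) J := by
    by_contra hcon
    obtain ⟨u, hu⟩ := hneσ
    have h1 : (fun k => eval (expPt σ (y k)) (f 0)) = fun _ => eval (expPt σ u) (f 0) := by
      funext k
      exact hconst 0 hcon _ (hexpRJ _) _ (hexpRJ _)
    rw [h1] at hlim
    exact hnotatt _ hu (tendsto_nhds_unique tendsto_const_nhds hlim)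
  have hJne : J.Nonempty := by
    by_contra hcon
    rw [Set.not_nonempty_iff_eq_empty] at hcon
    obtain ⟨a, ha, b, hb, hne⟩ := hI0
    apply hne
    have : a = b := by
      funext j
      rw [ha j (by simp [hcon]), hb j (by simp [hcon])]
    rw [this]
  -- the finite set of test vectors
  let K : Finset (Fin n → ℝ) := Finset.univ.biUnion fun i => (f i).support.image expVec
  have hK : ∀ i, ∀ κ ∈ (f i).support, expVec κ ∈ K := fun i κ hκ =>
    Finset.mem_biUnion.2 ⟨i, Finset.mem_univ i, Finset.mem_image_of_mem _ hκ⟩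
  let A : Finset (Fin n → ℝ) := (K ∪ Finset.image₂ (fun a b => a - b) K K) ∪
    Finset.univ.image (fun j => Pi.single j 1)
  obtain ⟨q, z, hqz⟩ := split_seq U y A
  obtain ⟨q', hq', hover⟩ := exists_override f q J
  have hA1 : ∀ i, ∀ κ ∈ (f i).support, expVec κ ∈ A := fun i κ hκ =>
    Finset.mem_union_left _ (Finset.mem_union_left _ (hK i κ hκ))
  have hA2 : ∀ i, ∀ κ ∈ (f i).support, ∀ κ' ∈ (f i).support, expVec κ - expVec κ' ∈ A :=
    fun i κ hκ κ' hκ' => Finset.mem_union_left _ (Finset.mem_union_right _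
      (Finset.mem_image₂_of_mem (hK i κ hκ) (hK i κ' hκ')))
  have hA3 : ∀ j : Fin n, (Pi.single j 1 : Fin n → ℝ) ∈ A := fun j =>
    Finset.mem_union_right _ (Finset.mem_image_of_mem _ (Finset.mem_univ j))
  -- minimal exponents
  have hsel : ∀ i, ∃ κ : Fin n →₀ ℕ, (∃ κ ∈ (f i).support, expVec κ ∈ RJ J) →
      κ ∈ (f i).support ∧ expVec κ ∈ RJ J ∧
        ∀ κ' ∈ (f i).support, q' ⬝ᵥ expVec κ ≤ q' ⬝ᵥ expVec κ' := by
    intro i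
    by_cases hP : ∃ κ ∈ (f i).support, expVec κ ∈ RJ J
    · have hne : ((f i).support.filter (fun κ => expVec κ ∈ RJ J)).Nonempty := by
        obtain ⟨κ, h1, h2⟩ := hP
        exact ⟨κ, Finset.mem_filter.2 ⟨h1, h2⟩⟩
      obtain ⟨κ, hκ, hmin⟩ := Finset.exists_min_image _ (fun κ => q' ⬝ᵥ expVec κ) hne
      rw [Finset.mem_filter] at hκ
      refine ⟨κ, fun _ => ⟨hκ.1, hκ.2, fun κ' hκ' => ?_⟩⟩
      by_cases hJ' : expVec κ' ∈ RJ J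
      · exact hmin κ' (Finset.mem_filter.2 ⟨hκ', hJ'⟩)
      · simp only [RJ, Set.mem_ofPred_eq, not_forall] at hJ'
        obtain ⟨j, hj, hne⟩ := hJ'
        have h1 := hover i κ hκ.1 κ' hκ' hκ.2 j hj hne
        have h2 : 0 ≤ expVec κ' j := Nat.cast_nonneg _
        linarith
    · exact ⟨0, fun h => absurd h hP⟩
  choose κ₀ hκ₀ using hsel
  have hPI : ∀ i, NotConstOn (f i) J → ∃ κ ∈ (f i).support, expVec κ ∈ RJ J :=
    fun i hi => exists_RJ_of_notConst hi
  have hface : ∀ i, NotConstOn (f i) J → NewtonFace (f i) q' ⊆ RJ J := by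
    intro i hi
    obtain ⟨h1, h2, h3⟩ := hκ₀ i (hPI i hi)
    apply face_subset_RJ
    intro κ hκ j hj
    rw [newtonD_eq (f i) q' h1 h3]
    by_cases hne : expVec κ j = 0
    · rw [hne, zero_add]; exact h3 κ hκ
    · exact hover i _ h1 κ hκ h2 j hj hne
  have hmain : ∀ i, (∃ κ ∈ (f i).support, expVec κ ∈ RJ J) → ∀ c : (Fin n →₀ ℕ) → ℝ,
      Tendsto (fun k => Real.exp (y k ⬝ᵥ expVec (κ₀ i)) * wSum (f i) (f i).support σ c (y k)) U
      (𝓝 (Real.exp (z ⬝ᵥ expVec (κ₀ i)) *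
        wSum (f i) ((f i).support.filter (fun κ => expVec κ ∈ NewtonFace (f i) q')) σ c z)) := by
    intro i hP c
    obtain ⟨h1, h2, h3⟩ := hκ₀ i hP
    refine wSum_limit U y (f i) J σ q' z hσJ h1 h3 (fun κ hκ hJ => ?_) c
    have hRJ : expVec κ - expVec (κ₀ i) ∈ RJ J := fun j hj => by
      rw [Pi.sub_apply, hJ j hj, h2 j hj, sub_zero]
    rw [dot_congr_RJ hq' hRJ]
    exact hqz _ (hA2 i κ hκ _ h1)
  let xs : Fin n → ℝ := expPt σ z
  have hxs : ∀ j, xs j = 0 ↔ j ∉ J := by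
    intro j
    simp [xs, expPt, J, Real.exp_ne_zero]
  have hle : ∀ i, i ≠ 0 → eval xs (facePoly (f i) (NewtonFace (f i) q')) ≤ 0 := by
    intro i hi
    by_cases hP : ∃ κ ∈ (f i).support, expVec κ ∈ RJ J
    · have h1 := hmain i hP (fun _ => 1)
      rw [← eval_face_expPt] at h1
      have h2 := le_of_tendsto h1 (Eventually.of_forall fun k => by
        rw [← eval_expPt]
        exact mul_nonpos_of_nonneg_of_nonpos (Real.exp_pos _).le
          ((hmemS _).1 (hyS k) i hi))
      by_contra hcon
      push Not at hcon
      have := mul_pos (Real.exp_pos (z ⬝ᵥ expVec (κ₀ i))) hcon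
      exact absurd h2 (not_le.2 this)
    · push Not at hP
      have : eval xs (facePoly (f i) (NewtonFace (f i) q')) = 0 := by
        rw [eval_face_expPt]
        refine Finset.sum_eq_zero fun κ hκ => ?_
        rw [prod_zero_of_not_RJ hσJ (hP κ (Finset.mem_filter.1 hκ).1)]
        ring
      exact this.le
  have hpd : ∀ i, NotConstOn (f i) J → ∀ j ∉ J,
      eval xs (pderiv j (facePoly (f i) (NewtonFace (f i) q'))) = 0 := by
    intro i hi j hj
    unfold facePoly
    rw [map_sum, map_sum]
    refine Finset.sum_eq_zero fun κ hκ => ?_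
    have h1 : expVec κ j = 0 := hface i hi (Finset.mem_filter.1 hκ).2 j hj
    have h2 : κ j = 0 := by unfold expVec at h1; exact_mod_cast h1
    rw [pderiv_monomial, h2]
    simp
  -- some coordinate goes to infinity
  have hqneg : ∃ j ∈ J, q' j < 0 := by
    by_contra hcon
    push Not at hcon
    have hcoord : ∀ j, ∃ l, Tendsto (fun k => expPt σ (y k) j) U (𝓝 l) := by
      intro j
      by_cases hj : j ∈ J
      · have h1 := hcon j hj
        rw [hq' j hj] at h1
        have h2 := hqz _ (hA3 j)
        simp only [dotProduct_single_one] at h2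
        rcases h2 with ⟨_, h⟩ | ⟨_, h⟩ | ⟨h, _⟩
        · exact ⟨_, ((Real.continuous_exp.tendsto _).comp h.neg).const_mul (σ j)⟩
        · exact ⟨_, (Real.tendsto_exp_neg_atTop_nhds_zero.comp h).const_mul (σ j)⟩
        · linarith
      · refine ⟨0, ?_⟩
        simp only [expPt, hσJ j hj, zero_mul]
        exact tendsto_const_nhds
    choose l hl using hcoord
    have hl' : Tendsto (fun k => expPt σ (y k)) U (𝓝 l) := tendsto_pi_nhds.2 hl
    have hlS : l ∈ S := hScl.mem_of_tendsto hl' (Eventually.of_forall hyS)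
    exact hnotatt l hlS (tendsto_nhds_unique (((hcont 0).tendsto l).comp hl') hlim)
  obtain ⟨h01, h02, h03⟩ := hκ₀ 0 (hPI 0 hI0)
  have hd0 : NewtonD (f 0) q' = q ⬝ᵥ expVec (κ₀ 0) := by
    rw [newtonD_eq (f 0) q' h01 h03, dot_congr_RJ hq' h02]
  have hlimF := hmain 0 (hPI 0 hI0) (fun _ => 1)
  rw [← eval_face_expPt] at hlimF
  simp only [← eval_expPt] at hlimF
  -- no descent direction
  have hnd : (∃ C, ∀ᶠ k in (U : Filter ℕ), Real.exp (y k ⬝ᵥ expVec (κ₀ 0)) ≤ C) →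
      ∀ v : Fin n → ℝ, (∀ i, NotConstOn (f i) J →
        (i = 0 ∨ eval xs (facePoly (f i) (NewtonFace (f i) q')) = 0) →
        ∑ j, xs j * eval xs (pderiv j (facePoly (f i) (NewtonFace (f i) q'))) * v j < 0) →
      False := by
    rintro ⟨C, hC⟩ v hv
    refine no_descent f U hU σ y {i | NotConstOn (f i) J} hI0
      (fun i hi u w => hconst i hi _ (hexpRJ u) _ (hexpRJ w))
      (fun k => (hmemS _).1 (hyS k)) (fun k y' hy' => hymin k y' ((hmemS _).2 hy'))
      (fun i k => Real.exp (y k ⬝ᵥ expVec (κ₀ i))) (fun i k => Real.exp_pos _) C hC v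
      (fun i => Real.exp (z ⬝ᵥ expVec (κ₀ i)) *
        eval xs (facePoly (f i) (NewtonFace (f i) q')))
      (fun i => Real.exp (z ⬝ᵥ expVec (κ₀ i)) *
        ∑ j, xs j * eval xs (pderiv j (facePoly (f i) (NewtonFace (f i) q'))) * v j)
      ?_ ?_ ?_ ?_
    · intro i hi
      have := hmain i (hPI i hi) (fun _ => 1)
      rw [← eval_face_expPt] at this
      exact this
    · intro i hi
      have := hmain i (hPI i hi) (fun κ => v ⬝ᵥ expVec κ)
      rw [← eval_face_deriv] at this
      exact this
    · intro i _ hi0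
      exact mul_nonpos_of_nonneg_of_nonpos (Real.exp_pos _).le (hle i hi0)
    · intro i hi hor
      refine mul_neg_of_pos_of_neg (Real.exp_pos _) (hv i hi (hor.imp_right fun h => ?_))
      exact (mul_eq_zero.1 h).resolve_left (Real.exp_ne_zero _)
  rcases hqz _ (hA1 0 _ h01) with ⟨hq0, hy0⟩ | ⟨hq0, hy0⟩ | ⟨hq0, hy0⟩
  · -- `d = 0`
    right
    have hexp0 : Tendsto (fun k => Real.exp (y k ⬝ᵥ expVec (κ₀ 0))) U
        (𝓝 (Real.exp (z ⬝ᵥ expVec (κ₀ 0)))) := (Real.continuous_exp.tendsto _).comp hy0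
    have hval : fstar = eval xs (facePoly (f 0) (NewtonFace (f 0) q')) := by
      have h1 := tendsto_nhds_unique (hexp0.mul hlim) hlimF
      exact mul_left_cancel₀ (Real.exp_ne_zero _) h1
    have hnd' := hnd ⟨Real.exp (z ⬝ᵥ expVec (κ₀ 0)) + 1,
      (hexp0.eventually_lt_const (lt_add_one _)).mono fun k hk => hk.le⟩
    let ι := {i : Fin (p + 1) // NotConstOn (f i) J ∧
      (i = 0 ∨ eval xs (facePoly (f i) (NewtonFace (f i) q')) = 0)}
    have : Nonempty ι := ⟨⟨0, hI0, Or.inl rfl⟩⟩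
    rcases gordan (fun (i : ι) j =>
      xs j * eval xs (pderiv j (facePoly (f i.1) (NewtonFace (f i.1) q')))) with
      ⟨v, hv⟩ | ⟨lam, hlam0, hlamne, hlam⟩
    · exact (hnd' v fun i hi hor => hv ⟨i, hi, hor⟩).elim
    · refine ⟨J, q', xs, fun i => if h : NotConstOn (f i) J ∧
        (i = 0 ∨ eval xs (facePoly (f i) (NewtonFace (f i) q')) = 0) then lam ⟨i, h⟩ else 0,
        hJne, hqneg, hxs, ⟨hval, hface 0 hI0, by rw [hd0, hq0]⟩, ?_, ?_, ?_, ?_⟩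
      · intro j
        by_cases hj : j ∈ J
        · have h1 := hlam j
          have hxj : xs j ≠ 0 := fun h => (hxs j).1 h hj
          apply mul_left_cancel₀ hxj
          rw [mul_zero]
          refine Eq.trans ?_ h1
          rw [Finset.mul_sum]
          simp only [dite_mul, zero_mul, mul_dite, mul_zero]
          rw [Finset.sum_dite, Finset.sum_const_zero, add_zero]
          refine Finset.sum_bij' (fun i _ => ⟨i.1, (Finset.mem_filter.1 i.2).2⟩)
            (fun i _ => ⟨i.1, Finset.mem_filter.2 ⟨Finset.mem_univ _, i.2⟩⟩) ?_ ?_ ?_ ?_ ?_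
          · intro i _; exact Finset.mem_univ _
          · intro i _; exact Finset.mem_attach _ _
          · intro i _; rfl
          · intro i _; rfl
          · intro i _; ring
        · refine Finset.sum_eq_zero fun i _ => ?_
          dsimp only
          split_ifs with h
          · rw [hpd i h.1 j hj, mul_zero]
          · rw [zero_mul]
      · intro i hi
        refine ⟨hle i hi, ?_⟩
        dsimp only
        split_ifs with h
        · rw [h.2.resolve_left hi, mul_zero]
        · rw [zero_mul]
      · intro i
        dsimp only
        split_ifs with h
        · exact hlam0 _
        · exact le_rfl
      · intro h0
        apply hlamne
        funext i
        have := congrFun h0 i.1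
        simp only [dif_pos i.2] at this
        exact this
  · -- `d > 0`
    left
    have h1 := (Real.tendsto_exp_neg_atTop_nhds_zero.comp hy0).mul hlimF
    rw [zero_mul] at h1
    refine tendsto_nhds_unique hlim (h1.congr fun k => ?_)
    simp only [Function.comp]
    rw [← mul_assoc, ← Real.exp_add, neg_add_cancel, Real.exp_zero, one_mul]
  · -- `d < 0`
    exfalso
    have hexp0 : Tendsto (fun k => Real.exp (y k ⬝ᵥ expVec (κ₀ 0))) U (𝓝 0) :=
      Real.tendsto_exp_atBot.comp hy0
    obtain ⟨v, _, hv⟩ := hMF J hJne q' xs (by rw [hd0]; exact hq0) hface hxs hle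
    have hval : eval xs (facePoly (f 0) (NewtonFace (f 0) q')) = 0 := by
      have h1 := tendsto_nhds_unique (hexp0.mul hlim) hlimF
      rw [zero_mul] at h1
      exact (mul_eq_zero.1 h1.symm).resolve_left (Real.exp_ne_zero _)
    refine hnd ⟨1, (hexp0.eventually_lt_const one_pos).mono fun k hk => hk.le⟩
      (fun j => v j / xs j) fun i hi hor => ?_
    have hz : eval xs (facePoly (f i) (NewtonFace (f i) q')) = 0 := by
      rcases hor with rfl | h
      · exact hval
      · exact h
    have h1 := hv i hi hz
    convert h1 using 1
    refine Finset.sum_congr rfl fun j _ => ?_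
    by_cases hj : j ∈ J
    · have hxj : xs j ≠ 0 := fun h => (hxs j).1 h hj
      field_simp
    · rw [hpd i hi j hj, mul_zero, zero_mul, zero_mul]
end
end

section
/- Let f₀ : ℝⁿ → ℝ be a polynomial function. If f₀ is nondegenerate at infinity, then the unconstrained problem inf_{x ∈ ℝⁿ} f₀(x) (i.e., the case p = 0, S = ℝⁿ) has the Mangasarian–Fromovitz property at infinity ((MF)∞). -/
open MvPolynomial Set Filter
open scoped Classical

noncomputable section

/-- The (MF)∞ property for the unconstrained problem `inf_{x ∈ ℝⁿ} f₀(x)` (case `p = 0`). -/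
def MFinftyUnconstrained {n : ℕ} (f : MvPolynomial (Fin n) ℝ) : Prop :=
  ∀ J : Set (Fin n), J.Nonempty → ∀ q x : Fin n → ℝ,
    NewtonD f q < 0 →
    (NotConstOn f J → NewtonFace f q ⊆ RJ J) →
    (∀ j, x j = 0 ↔ j ∉ J) →
    NotConstOn f J →
    eval x (facePoly f (NewtonFace f q)) = 0 →
    ∃ v : Fin n → ℝ, v ≠ 0 ∧
      ∑ j, eval x (pderiv j (facePoly f (NewtonFace f q))) * v j < 0


/-- **Lemma 2.1, "⇒" direction.** -/
theorem nondegenerate_imp_MFinfty {n : ℕ} (f₀ : MvPolynomial (Fin n) ℝ)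
    (hnd : NondegenerateAtInfinity f₀) : MFinftyUnconstrained f₀ := by
  intro J _ q x hq hface hx hnc _
  have hF := hface hnc
  set g := facePoly f₀ (NewtonFace f₀ q) with hg
  have key : ∀ j, eval (fun i => if i ∈ J then x i else 1) (pderiv j g)
      = eval x (pderiv j g) := by
    intro j
    rw [hg, facePoly]
    simp only [map_sum]
    refine Finset.sum_congr rfl fun κ hκ => ?_
    have hκ' := hF (Finset.mem_filter.mp hκ).2
    rw [pderiv_monomial, eval_monomial, eval_monomial]
    congr 1
    refine Finset.prod_congr rfl fun i hi => ?_
    by_cases hiJ : i ∈ J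
    · simp [hiJ]
    · exfalso
      have h0 : (κ i : ℝ) = 0 := hκ' i hiJ
      have h1 : κ i = 0 := by exact_mod_cast h0
      rw [Finsupp.mem_support_iff] at hi
      apply hi
      simp [h1]
  have hex := hnd q hq (fun i => if i ∈ J then x i else 1) (by
    intro j
    by_cases hj : j ∈ J
    · simp only [hj, if_true]
      exact fun h => (hx j).mp h hj
    · simp [hj])
  push Not at hex
  obtain ⟨j, hj⟩ := hex
  rw [← hg, key] at hj
  refine ⟨fun i => - eval x (pderiv i g), fun h => hj ?_, ?_⟩
  · have := congrFun h j
    simpa using this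
  · simp only [mul_neg, Finset.sum_neg_distrib, neg_lt_zero]
    exact Finset.sum_pos' (fun i _ => mul_self_nonneg _)
      ⟨j, Finset.mem_univ j, mul_self_pos.mpr hj⟩
end
end

section
/- Let f₀ : ℝⁿ → ℝ be a polynomial function. If the unconstrained problem inf_{x ∈ ℝⁿ} f₀(x) (i.e., the case p = 0, S = ℝⁿ) has the Mangasarian–Fromovitz property at infinity ((MF)∞), then f₀ is nondegenerate at infinity. -/
open MvPolynomial Set Filter
open scoped Classical

noncomputable section

/-- If `d(q, Γ(f)) < 0` then `f` is not constant on `ℝⁿ`. -/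
theorem notConst_of_newtonD_neg {n : ℕ} (f : MvPolynomial (Fin n) ℝ) (q : Fin n → ℝ)
    (h : NewtonD f q < 0) : NotConstOn f Set.univ := by
  by_contra hc
  have hall : ∀ x y : Fin n → ℝ, eval x f = eval y f := by
    intro x y
    by_contra hne
    exact hc ⟨x, by simp [RJ], y, by simp [RJ], hne⟩
  have hf : f = C (eval 0 f) := by
    apply MvPolynomial.funext
    intro x
    rw [eval_C]
    exact hall x 0
  have hsub : NewtonPolyhedron f ⊆ {0} := by
    apply convexHull_min _ (convex_singleton 0)
    rintro _ ⟨κ, hκ, rfl⟩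
    have h1 : coeff κ f ≠ 0 := by simpa using hκ
    rw [hf, coeff_C] at h1
    have h2 : 0 = κ := by
      by_contra h3
      simp [h3] at h1
    subst h2
    ext j
    simp [expVec]
  refine absurd h (not_lt.mpr ?_)
  apply Real.sInf_nonneg
  rintro _ ⟨κ, hκ, rfl⟩
  have := hsub hκ
  simp only [Set.mem_singleton_iff] at this
  subst this
  simp

/-- Euler relation for a monomial. -/
theorem euler_monomial {n : ℕ} (κ : Fin n →₀ ℕ) (a : ℝ) (j : Fin n) (x : Fin n → ℝ) :
    x j * eval x (pderiv j (monomial κ a)) = (κ j : ℝ) * eval x (monomial κ a) := by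
  have h := congrArg (eval x) (X_mul_pderiv_monomial (R := ℝ) (i := j) (m := κ) (r := a))
  simpa using h

/-- Euler relation for the face polynomial. -/
theorem euler_face {n : ℕ} (f : MvPolynomial (Fin n) ℝ) (q x : Fin n → ℝ) :
    ∑ j, q j * (x j * eval x (pderiv j (facePoly f (NewtonFace f q)))) =
      NewtonD f q * eval x (facePoly f (NewtonFace f q)) := by
  unfold facePoly
  simp only [map_sum, Finset.mul_sum, euler_monomial]
  rw [Finset.sum_comm]
  apply Finset.sum_congr rfl
  intro κ hκ
  have h := (Finset.mem_filter.mp hκ).2.2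
  rw [← h, Finset.sum_mul]
  apply Finset.sum_congr rfl
  intro j _
  simp only [expVec]
  ring

/-- **Lemma 2.1, "⇐" direction.** -/
theorem MFinfty_imp_nondegenerate {n : ℕ} (f₀ : MvPolynomial (Fin n) ℝ)
    (hMF : MFinftyUnconstrained f₀) : NondegenerateAtInfinity f₀ := by
  intro q hq x hx hgrad
  have hnc := notConst_of_newtonD_neg f₀ q hq
  have hne : (Set.univ : Set (Fin n)).Nonempty := by
    obtain ⟨a, _, b, _, hab⟩ := hnc
    by_contra hemp
    apply hab
    have : a = b := by
      ext j
      exact (hemp ⟨j, Set.mem_univ j⟩).elim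
    rw [this]
  have hzero : eval x (facePoly f₀ (NewtonFace f₀ q)) = 0 := by
    have h := euler_face f₀ q x
    simp only [hgrad, mul_zero, Finset.sum_const_zero] at h
    exact (mul_eq_zero.mp h.symm).resolve_left hq.ne
  obtain ⟨v, _, hv⟩ := hMF Set.univ hne q x hq (fun _ _ _ j hj => (hj (Set.mem_univ j)).elim)
    (fun j => by simp [hx j]) hnc hzero
  simp [hgrad] at hv
end
end
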